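/- arXiv:2111.00567 — 5 statements merged into one kernel-verified Lean document; each statement's English description precedes it below -/
import Mathlib

section
/- For every integer n ≥ 1, every integer M with 1 ≤ M ≤ n−1, and every q ∈ (0,1), the success probability of the strategy S(n,M) under the Mallows distribution with parameter q is 𝒫_n^q(S(n,M)) = ((1−q)/(1−q^n)) · q^{n−M−1} · (1−q^M) · Σ_{j=M+1}^{n} 1/(1−q^{j−1}). -/
open Finset Filter

/-- The number of inversions of a permutation of `Fin n`. -/
def invCount (n : ℕ) (σ : Equiv.Perm (Fin n)) : ℕ :=
  (Finset.univ.filter (fun p : Fin n × Fin n => p.1 < p.2 ∧ σ p.2 < σ p.1)).card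

/-- Normalization constant of the Mallows distribution:
`Z_n(q) = ∑_{σ ∈ S_n} q^{inv σ}`. -/
noncomputable def mallowsZ (n : ℕ) (q : ℝ) : ℝ :=
  ∑ σ : Equiv.Perm (Fin n), q ^ invCount n σ

/-- The Mallows probability of a set `A` of permutations:
`P_n^q(A) = (∑_{σ ∈ A} q^{inv σ}) / Z_n(q)`. -/
noncomputable def mallowsProb (n : ℕ) (q : ℝ) (A : Finset (Equiv.Perm (Fin n))) : ℝ :=
  (∑ σ ∈ A, q ^ invCount n σ) / mallowsZ n q

/-- The success event for the strategy `S(n,M)`.  Positions are indexed by `Fin n`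
(the index `i : Fin n` represents the `(i+1)`-st arriving item) and ranks are the
values of `σ` (the value `n-1`, i.e. the top of `Fin n`, represents the highest
rank `n`).  For `M ≥ 1` the strategy succeeds iff for some position `j` with
`(j:ℕ) ≥ M` (i.e. item number `j+1 ≥ M+1`) the item at position `j` has the top
rank and the maximum rank among the items strictly before position `j` equals the
maximum rank among the first `M` items.  For `M = 0` it succeeds iff the first
item has top rank. -/
def winEvent (n M : ℕ) : Finset (Equiv.Perm (Fin n)) :=
  if M = 0 then
    Finset.univ.filter (fun σ => ∀ i : Fin n, (i : ℕ) = 0 → (σ i : ℕ) = n - 1)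
  else
    Finset.univ.filter (fun σ => ∃ j : Fin n, M ≤ (j : ℕ) ∧ (σ j : ℕ) = n - 1 ∧
      (Finset.univ.filter (fun i : Fin n => i < j)).sup (fun i => (σ i : ℕ)) =
      (Finset.univ.filter (fun i : Fin n => (i : ℕ) < M)).sup (fun i => (σ i : ℕ)))

/-- `𝒫_n^q(S(n,M))`, the success probability of the strategy `S(n,M)` under the
Mallows distribution with parameter `q`. -/
noncomputable def succProb (n M : ℕ) (q : ℝ) : ℝ := mallowsProb n q (winEvent n M)

/-- Insert the value `v` in the last position. -/
def insLast (n : ℕ) (v : Fin (n + 1)) (τ : Equiv.Perm (Fin n)) : Equiv.Perm (Fin (n + 1)) :=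
  (finSuccEquivLast.trans (Equiv.optionCongr τ)).trans (finSuccEquiv' v).symm

theorem insLast_last (n : ℕ) (v : Fin (n + 1)) (τ : Equiv.Perm (Fin n)) :
    insLast n v τ (Fin.last n) = v := by
  simp [insLast]

theorem insLast_castSucc (n : ℕ) (v : Fin (n + 1)) (τ : Equiv.Perm (Fin n)) (i : Fin n) :
    insLast n v τ i.castSucc = v.succAbove (τ i) := by
  simp [insLast]

theorem insLast_bij (n : ℕ) :
    Function.Bijective (fun p : Fin (n + 1) × Equiv.Perm (Fin n) => insLast n p.1 p.2) := by
  rw [Fintype.bijective_iff_injective_and_card]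
  constructor
  · rintro ⟨v, τ⟩ ⟨w, ρ⟩ h
    simp only at h
    have hv : v = w := by
      rw [← insLast_last n v τ, h, insLast_last]
    subst hv
    have : τ = ρ := by
      ext i
      have h2 := insLast_castSucc n v τ i
      rw [h, insLast_castSucc] at h2
      rw [Fin.succAbove_right_injective h2]
    rw [this]
  · simp [Fintype.card_perm, Nat.factorial_succ]

theorem invCount_eq (n : ℕ) (σ : Equiv.Perm (Fin n)) :
    invCount n σ = ∑ i, ∑ j, if i < j ∧ σ j < σ i then 1 else 0 := by
  rw [invCount, Finset.card_filter, Fintype.sum_prod_type]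

theorem sum_lt_succAbove (n : ℕ) (v : Fin (n + 1)) :
    (∑ i : Fin n, if v < v.succAbove i then 1 else 0) = n - (v : ℕ) := by
  have : ∀ i : Fin n, v < v.succAbove i ↔ (v : ℕ) ≤ i := by
    intro i
    rw [Fin.lt_succAbove_iff_le_castSucc]; rfl
  simp only [this]
  rw [Fin.sum_univ_eq_sum_range (fun i => if (v : ℕ) ≤ i then 1 else 0) n, ← Finset.card_filter]
  have : (Finset.range n).filter (fun i => (v : ℕ) ≤ i) = Finset.Ico (v : ℕ) n := by
    ext i; simp; omega
  rw [this, Nat.card_Ico]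

theorem invCount_insLast (n : ℕ) (v : Fin (n + 1)) (τ : Equiv.Perm (Fin n)) :
    invCount (n + 1) (insLast n v τ) = (n - (v : ℕ)) + invCount n τ := by
  rw [invCount_eq, invCount_eq, Fin.sum_univ_castSucc]
  simp only [Fin.sum_univ_castSucc, insLast_last, insLast_castSucc, Fin.castSucc_lt_castSucc_iff,
    Fin.succAbove_lt_succAbove_iff, Fin.castSucc_lt_last, true_and, lt_irrefl, false_and, if_false]
  have h1 : ∀ x : Fin n, ¬ (Fin.last n < x.castSucc) := fun x => by
    simpa using Fin.le_last _
  simp only [h1, false_and, if_false, Finset.sum_const_zero, add_zero]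
  rw [Finset.sum_add_distrib, Equiv.sum_comp τ (fun i => if v < v.succAbove i then 1 else 0),
    sum_lt_succAbove, add_comm]

/-- Weight of a set of permutations given by a predicate. -/
noncomputable def wt (n : ℕ) (q : ℝ) (P : Equiv.Perm (Fin n) → Prop) : ℝ :=
  open Classical in ∑ σ, if P σ then q ^ invCount n σ else 0

/-- `q + ... + q^n` -/
noncomputable def gs (n : ℕ) (q : ℝ) : ℝ := ∑ v : Fin n, q ^ (n - (v : ℕ))

theorem gs_mul (n : ℕ) (q : ℝ) : (1 - q) * gs n q = q * (1 - q ^ n) := by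
  unfold gs
  rw [Fin.sum_univ_eq_sum_range (fun v => q ^ (n - v)) n]
  induction n with
  | zero => simp
  | succ n ih =>
    rw [Finset.sum_range_succ']
    simp only [Nat.add_sub_add_right, mul_add, ih, Nat.sub_zero]
    ring

theorem wt_succ (n : ℕ) (q : ℝ) (P : Equiv.Perm (Fin (n + 1)) → Prop)
    (P1 P2 : Equiv.Perm (Fin n) → Prop)
    (h1 : ∀ τ, P (insLast n (Fin.last n) τ) ↔ P1 τ)
    (h2 : ∀ (v : Fin n) τ, P (insLast n v.castSucc τ) ↔ P2 τ) :
    wt (n + 1) q P = wt n q P1 + gs n q * wt n q P2 := by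
  classical
  unfold wt
  rw [← (insLast_bij n).sum_comp, Fintype.sum_prod_type, Fin.sum_univ_castSucc]
  simp only [h1, h2, invCount_insLast, gs, Fin.val_last, Nat.sub_self, zero_add, Fin.val_castSucc]
  rw [add_comm, Finset.sum_mul]
  congr 1
  · refine Finset.sum_congr rfl fun v _ => ?_
    rw [Finset.mul_sum]
    refine Finset.sum_congr rfl fun τ _ => ?_
    by_cases h : P2 τ <;> simp [h, pow_add]

/-- The order form of the winning event. -/
def Win (n M : ℕ) (σ : Equiv.Perm (Fin n)) : Prop :=
  ∃ j : Fin n, M ≤ (j : ℕ) ∧ (σ j : ℕ) + 1 = n ∧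
    ∀ i, i < j → ∃ k : Fin n, (k : ℕ) < M ∧ σ i ≤ σ k

/-- The top item is in the first `M`. -/
def TopIn (n M : ℕ) (σ : Equiv.Perm (Fin n)) : Prop :=
  ∃ j : Fin n, (j : ℕ) < M ∧ (σ j : ℕ) + 1 = n

theorem mem_winEvent (n M : ℕ) (hM1 : 1 ≤ M) (hM2 : M < n) (σ : Equiv.Perm (Fin n)) :
    σ ∈ winEvent n M ↔ Win n M σ := by
  rw [winEvent, if_neg (by omega)]
  simp only [Finset.mem_filter, Finset.mem_univ, true_and, Win]
  refine exists_congr fun j => and_congr_right fun hj => and_congr (by omega) ?_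
  have hne : (Finset.univ.filter (fun i : Fin n => (i : ℕ) < M)).Nonempty :=
    ⟨⟨0, by omega⟩, by simp; omega⟩
  constructor
  · intro h i hi
    obtain ⟨k, hk, hk2⟩ := Finset.exists_mem_eq_sup _ hne (fun i => (σ i : ℕ))
    refine ⟨k, by simpa using hk, ?_⟩
    rw [Fin.le_def, ← hk2, ← h]
    exact Finset.le_sup (f := fun i => (σ i : ℕ)) (by simpa using hi)
  · intro h
    apply le_antisymm
    · refine Finset.sup_le fun i hi => ?_
      obtain ⟨k, hk, hk2⟩ := h i (by simpa using hi)
      exact le_trans (Fin.le_def.1 hk2)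
        (Finset.le_sup (f := fun i => (σ i : ℕ)) (by simpa using hk))
    · apply Finset.sup_mono
      intro i hi
      simp only [Finset.mem_filter, Finset.mem_univ, true_and] at hi ⊢
      rw [Fin.lt_def]; omega

theorem top_succAbove (n : ℕ) (v i : Fin n) :
    ((v.castSucc.succAbove i : Fin (n + 1)) : ℕ) + 1 = n + 1 ↔ (i : ℕ) + 1 = n := by
  have := v.2
  have := i.2
  rw [Fin.succAbove]
  split_ifs with h
  · rw [Fin.lt_def] at h
    simp at h ⊢
    omega
  · simp

theorem win_last (n M : ℕ) (hM : M ≤ n) (τ : Equiv.Perm (Fin n)) (hn : 0 < n) :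
    Win (n + 1) M (insLast n (Fin.last n) τ) ↔ TopIn n M τ := by
  have h0 : ∀ x : Fin n, ¬ ((x : ℕ) = n) := fun x => by have := x.2; omega
  have h1 : ¬ (n < M) := by omega
  simp only [Win, TopIn, Fin.exists_fin_succ', Fin.forall_fin_succ', insLast_last, insLast_castSucc,
    Fin.val_castSucc, Fin.val_last, Fin.succAbove_last, Fin.castSucc_lt_last, h1,
    false_and, or_false, Fin.castSucc_le_castSucc_iff, lt_irrefl, false_imp_iff, and_true,
    true_imp_iff, add_left_inj, h0, and_false, exists_false, false_or, hM, true_and]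
  constructor
  · intro h
    obtain ⟨k, hk, hk2⟩ := h (τ.symm ⟨n - 1, by omega⟩)
    refine ⟨k, hk, ?_⟩
    rw [Fin.le_def] at hk2
    simp at hk2
    have := (τ k).2
    omega
  · rintro ⟨j, hj, hj2⟩ i
    refine ⟨j, hj, ?_⟩
    rw [Fin.le_def]
    have := (τ i).2
    omega

theorem win_castSucc (n M : ℕ) (hM : M ≤ n) (v : Fin n) (τ : Equiv.Perm (Fin n)) :
    Win (n + 1) M (insLast n v.castSucc τ) ↔ Win n M τ := by
  have h1 : ¬ (n < M) := by omega
  have h2 : ¬ ((v : ℕ) + 1 = n + 1) := by have := v.2; omega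
  have h3 : ∀ x : Fin n, ¬ (Fin.last n < x.castSucc) := fun x => by
    simpa using Fin.le_last _
  simp only [Win, Fin.exists_fin_succ', Fin.forall_fin_succ', insLast_last, insLast_castSucc,
    Fin.val_castSucc, Fin.val_last, top_succAbove, h1, h2, h3, Fin.succAbove_le_succAbove_iff,
    false_and, and_false, or_false, Fin.castSucc_lt_castSucc_iff, false_imp_iff, and_true]

theorem topIn_last (n M : ℕ) (hM : M ≤ n) (τ : Equiv.Perm (Fin n)) :
    TopIn (n + 1) M (insLast n (Fin.last n) τ) ↔ False := by
  have h0 : ∀ x : Fin n, ¬ ((x : ℕ) = n) := fun x => by have := x.2; omega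
  have h1 : ¬ (n < M) := by omega
  simp [TopIn, Fin.exists_fin_succ', insLast_last, insLast_castSucc, h0, h1]

theorem topIn_castSucc (n M : ℕ) (hM : M ≤ n) (v : Fin n) (τ : Equiv.Perm (Fin n)) :
    TopIn (n + 1) M (insLast n v.castSucc τ) ↔ TopIn n M τ := by
  have h1 : ¬ (n < M) := by omega
  simp only [TopIn, Fin.exists_fin_succ', insLast_last, insLast_castSucc,
    Fin.val_castSucc, Fin.val_last, top_succAbove, h1, false_and, or_false]

theorem wt_false (n : ℕ) (q : ℝ) : wt n q (fun _ => False) = 0 := by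
  simp [wt]

theorem wt_true (n : ℕ) (q : ℝ) : wt n q (fun _ => True) = mallowsZ n q := by
  simp [wt, mallowsZ]

theorem Z_succ (n : ℕ) (q : ℝ) : mallowsZ (n + 1) q = mallowsZ n q * (1 + gs n q) := by
  rw [← wt_true, wt_succ n q _ (fun _ => True) (fun _ => True) (by simp) (by simp), wt_true]
  ring

theorem main_aux (M : ℕ) (hM : 1 ≤ M) (q : ℝ) (hq0 : 0 < q) (hq1 : q < 1) (d : ℕ) :
    wt (M + d) q (TopIn (M + d) M) * (1 - q ^ (M + d)) = mallowsZ (M + d) q * q ^ d * (1 - q ^ M) ∧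
    wt (M + d) q (Win (M + d) M) * (1 - q ^ (M + d)) * q = mallowsZ (M + d) q * (1 - q) * q ^ d *
      (1 - q ^ M) * ∑ j ∈ Finset.Icc (M + 1) (M + d), 1 / (1 - q ^ (j - 1)) := by
  induction d with
  | zero =>
    constructor
    · have : TopIn (M + 0) M = fun _ => True := by
        funext σ
        refine eq_true ⟨σ.symm ⟨M - 1, by omega⟩, (σ.symm _).2, ?_⟩
        simp; omega
      rw [this, wt_true]; simp
    · have : Win (M + 0) M = fun _ => False := by
        funext σ
        refine eq_false ?_
        rintro ⟨j, hj, _⟩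
        have := j.2
        omega
      rw [this, wt_false]; simp
  | succ d ih =>
    obtain ⟨ih1, ih2⟩ := ih
    have e1 := wt_succ (M + d) q (TopIn (M + d + 1) M) _ _ (topIn_last (M + d) M (by omega))
      (topIn_castSucc (M + d) M (by omega))
    have e2 := wt_succ (M + d) q (Win (M + d + 1) M) _ _
      (fun τ => win_last (M + d) M (by omega) τ (by omega))
      (win_castSucc (M + d) M (by omega))
    have e3 := Z_succ (M + d) q
    have e4 := gs_mul (M + d) q
    rw [wt_false, zero_add] at e1
    change wt (M + d + 1) q (TopIn (M + d + 1) M) * (1 - q ^ (M + d + 1)) = _ ∧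
      wt (M + d + 1) q (Win (M + d + 1) M) * (1 - q ^ (M + d + 1)) * q =
      mallowsZ (M + d + 1) q * (1 - q) * q ^ (d + 1) *
      (1 - q ^ M) * ∑ j ∈ Finset.Icc (M + 1) (M + d + 1), 1 / (1 - q ^ (j - 1))
    rw [Finset.sum_Icc_succ_top (by omega), show M + (d + 1) = M + d + 1 from rfl, e1, e2, e3]
    simp only [Nat.add_sub_cancel]
    have hA : 0 < 1 - q ^ (M + d) := by
      have := pow_lt_one₀ hq0.le hq1 (show M + d ≠ 0 by omega); linarith
    have hq : 1 - q ≠ 0 := by linarith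
    have eg : gs (M + d) q = q * (1 - q ^ (M + d)) / (1 - q) := by
      field_simp; linarith
    set S := ∑ j ∈ Finset.Icc (M + 1) (M + d), 1 / (1 - q ^ (j - 1))
    rw [eg, pow_succ q (M + d), pow_succ q d]
    set T := wt (M + d) q (TopIn (M + d) M)
    set W := wt (M + d) q (Win (M + d) M)
    set Z := mallowsZ (M + d) q
    have eT : T = Z * q ^ d * (1 - q ^ M) / (1 - q ^ (M + d)) := by
      rw [eq_div_iff hA.ne']; exact ih1
    have eW : W = Z * (1 - q) * q ^ d * (1 - q ^ M) * S / ((1 - q ^ (M + d)) * q) := by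
      rw [eq_div_iff (by positivity), ← ih2]; ring
    rw [eT, eW]
    generalize q ^ (M + d) = A at *
    have hA' := hA.ne'
    have hq0' := hq0.ne'
    constructor
    · field_simp; ring
    · field_simp; ring

theorem stmt_0 (n M : ℕ) (q : ℝ) (hn : 1 ≤ n) (hM1 : 1 ≤ M) (hM2 : M ≤ n - 1)
    (hq : q ∈ Set.Ioo (0 : ℝ) 1) :
    succProb n M q =
      (1 - q) / (1 - q ^ n) * q ^ (n - M - 1) * (1 - q ^ M) *
        ∑ j ∈ Finset.Icc (M + 1) n, 1 / (1 - q ^ (j - 1)) := by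
  obtain ⟨hq0, hq1⟩ := hq
  obtain ⟨d, rfl⟩ : ∃ d, n = M + (d + 1) := ⟨n - M - 1, by omega⟩
  have h := (main_aux M hM1 q hq0 hq1 (d + 1)).2
  have hW : ∑ σ ∈ winEvent (M + (d + 1)) M, q ^ invCount (M + (d + 1)) σ =
      wt (M + (d + 1)) q (Win (M + (d + 1)) M) := by
    classical
    rw [wt, ← Finset.sum_filter]
    refine Finset.sum_congr ?_ fun _ _ => rfl
    ext σ
    rw [mem_winEvent _ _ hM1 (by omega)]
    simp
  have hZ : 0 < mallowsZ (M + (d + 1)) q :=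
    Finset.sum_pos (fun σ _ => by positivity) Finset.univ_nonempty
  have hA : 0 < 1 - q ^ (M + (d + 1)) := by
    have := pow_lt_one₀ hq0.le hq1 (show M + (d + 1) ≠ 0 by omega); linarith
  rw [succProb, mallowsProb, hW, show M + (d + 1) - M - 1 = d by omega, div_eq_iff hZ.ne']
  apply mul_right_cancel₀ (mul_pos hA hq0).ne'
  rw [← mul_assoc, h, pow_succ q d]
  field_simp
end

section
/- Let c > 0, let b ∈ (0,1), set q_n = 1 − c/n, and let (M_n) be a sequence of integers with 1 ≤ M_n ≤ n−1 and lim_{n→∞} M_n/n = b. Then lim_{n→∞} 𝒫_n^{q_n}(S(n,M_n)) = (c e^{−c} (e^{bc} − 1)/(1 − e^{−c})) · (1 − b + (1/c) log((1 − e^{−c})/(1 − e^{−bc}))). -/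
open Finset Filter

namespace Mallows

/-- Insert a new last value `v`, shifting the others. -/
def ins {n : ℕ} (p : Fin (n+1) × Equiv.Perm (Fin n)) : Equiv.Perm (Fin (n+1)) :=
  finSuccEquivLast.trans ((Equiv.optionCongr p.2).trans (finSuccEquiv' p.1).symm)

lemma ins_last {n : ℕ} (v : Fin (n+1)) (τ : Equiv.Perm (Fin n)) :
    ins (v, τ) (Fin.last n) = v := by
  simp [ins]

lemma ins_castSucc {n : ℕ} (v : Fin (n+1)) (τ : Equiv.Perm (Fin n)) (i : Fin n) :
    ins (v, τ) i.castSucc = v.succAbove (τ i) := by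
  simp [ins]

lemma ins_bij (n : ℕ) : Function.Bijective (ins (n := n)) := by
  rw [Fintype.bijective_iff_injective_and_card]
  constructor
  · rintro ⟨v, τ⟩ ⟨w, ρ⟩ h
    have h1 : v = w := by
      rw [← ins_last v τ, h, ins_last]
    subst h1
    congr 1
    ext i : 1
    have := ins_castSucc v τ i
    rw [h, ins_castSucc] at this
    exact (Fin.succAbove_right_injective this).symm
  · simp [Fintype.card_perm, Nat.factorial_succ]

lemma sum_perm_succ (n : ℕ) (f : Equiv.Perm (Fin (n+1)) → ℝ) :
    ∑ σ, f σ = ∑ v : Fin (n+1), ∑ τ : Equiv.Perm (Fin n), f (ins (v, τ)) := by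
  rw [← Fintype.sum_prod_type']
  exact ((ins_bij n).sum_comp f).symm

lemma invCount_eq (n : ℕ) (σ : Equiv.Perm (Fin n)) :
    invCount n σ = ∑ j, ∑ i, if i < j ∧ σ j < σ i then 1 else 0 := by
  rw [invCount, Finset.card_filter, Fintype.sum_prod_type, Finset.sum_comm]

lemma invCount_ins (n : ℕ) (v : Fin (n+1)) (τ : Equiv.Perm (Fin n)) :
    invCount (n+1) (ins (v, τ)) = invCount n τ + (n - v) := by
  rw [invCount_eq, invCount_eq, Fin.sum_univ_castSucc]
  congr 1
  · apply Finset.sum_congr rfl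
    intro j _
    rw [Fin.sum_univ_castSucc]
    simp [ins_castSucc, Fin.succAbove_lt_succAbove_iff, not_lt.2 (Fin.le_last _)]
  · rw [Fin.sum_univ_castSucc]
    simp only [ins_castSucc, ins_last, Fin.castSucc_lt_last, true_and, lt_irrefl, if_false, false_and, add_zero]
    rw [Equiv.sum_comp τ (fun w => if v < v.succAbove w then 1 else 0)]
    rw [← Finset.card_filter]
    have h2 : (Finset.univ.filter (fun w : Fin n => (w : ℕ) < v)).card = (v : ℕ) := by
      rw [Fin.card_filter_val_lt]; omega
    have h3 := Finset.card_filter_add_card_filter_not (s := (Finset.univ : Finset (Fin n)))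
      (fun w : Fin n => (w : ℕ) < v)
    have h4 : (Finset.univ.filter (fun w : Fin n => v < v.succAbove w))
        = Finset.univ.filter (fun w : Fin n => ¬ (w : ℕ) < v) := by
      ext w
      simp only [Finset.mem_filter, Finset.mem_univ, true_and, Fin.lt_succAbove_iff_le_castSucc,
        Fin.le_def, Fin.val_castSucc, not_lt]
    rw [h4]
    simp only [Finset.card_univ, Fintype.card_fin] at h3
    omega

def IsRec {n : ℕ} (σ : Equiv.Perm (Fin n)) (k : Fin n) : Prop := ∀ i, i < k → σ i < σ k

instance {n : ℕ} (σ : Equiv.Perm (Fin n)) (k : Fin n) : Decidable (IsRec σ k) := by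
  unfold IsRec; infer_instance

def rc {n : ℕ} (M : ℕ) (σ : Equiv.Perm (Fin n)) : ℕ :=
  (Finset.univ.filter (fun k : Fin n => M ≤ (k : ℕ) ∧ IsRec σ k)).card

lemma isRec_castSucc {n : ℕ} (v : Fin (n+1)) (τ : Equiv.Perm (Fin n)) (k : Fin n) :
    IsRec (ins (v, τ)) k.castSucc ↔ IsRec τ k := by
  unfold IsRec
  rw [Fin.forall_fin_succ']
  simp [ins_castSucc, Fin.succAbove_lt_succAbove_iff, not_lt.2 (Fin.le_last _)]

lemma isRec_last {n : ℕ} (v : Fin (n+1)) (τ : Equiv.Perm (Fin n)) :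
    IsRec (ins (v, τ)) (Fin.last n) ↔ v = Fin.last n := by
  constructor
  · intro h
    by_contra hv
    have hv' : v < Fin.last n := lt_of_le_of_ne (Fin.le_last _) hv
    obtain ⟨i, hi⟩ := (ins (v, τ)).surjective (Fin.last n)
    have hne : i ≠ Fin.last n := by
      rintro rfl
      rw [ins_last] at hi; exact hv hi
    have := h i (lt_of_le_of_ne (Fin.le_last _) hne)
    rw [hi] at this
    exact absurd this (not_lt.2 (Fin.le_last _))
  · rintro rfl i hi
    have h0 := ins_last (Fin.last n) τ
    refine lt_of_le_of_ne (by rw [h0]; exact Fin.le_last _) ?_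
    intro h
    exact hi.ne ((ins _).injective h)

lemma rc_ins {n : ℕ} (M : ℕ) (hM : M ≤ n) (v : Fin (n+1)) (τ : Equiv.Perm (Fin n)) :
    rc M (ins (v, τ)) = rc M τ + if v = Fin.last n then 1 else 0 := by
  unfold rc
  rw [Finset.card_filter, Finset.card_filter, Fin.sum_univ_castSucc]
  simp [isRec_castSucc, isRec_last, hM]

noncomputable def S (q : ℝ) (M n : ℕ) (g : ℕ → ℝ) : ℝ :=
  ∑ σ : Equiv.Perm (Fin n), q ^ invCount n σ * g (rc M σ)

lemma sum_rev (q : ℝ) (n : ℕ) :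
    ∑ i : Fin n, q ^ (n - (i : ℕ)) = q * ∑ k ∈ range n, q ^ k := by
  rw [Fin.sum_univ_eq_sum_range (fun i => q ^ (n - i)), ← Finset.sum_range_reflect, Finset.mul_sum]
  apply Finset.sum_congr rfl
  intro k hk
  rw [Finset.mem_range] at hk
  rw [← pow_succ']
  congr 1; omega

lemma S_succ (q : ℝ) (M n : ℕ) (hM : M ≤ n) (g : ℕ → ℝ) :
    S q M (n+1) g = (q * ∑ k ∈ range n, q ^ k) * S q M n g + S q M n (fun r => g (r+1)) := by
  unfold S
  rw [sum_perm_succ, Fin.sum_univ_castSucc, ← sum_rev]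
  congr 1
  · rw [Finset.sum_mul]
    apply Finset.sum_congr rfl
    intro v _
    rw [Finset.mul_sum]
    apply Finset.sum_congr rfl
    intro τ _
    rw [invCount_ins, rc_ins M hM, if_neg (Fin.castSucc_lt_last v).ne, pow_add]
    simp; ring
  · apply Finset.sum_congr rfl
    intro τ _
    rw [invCount_ins, rc_ins M hM, if_pos rfl]
    simp

lemma S_base (q : ℝ) (M : ℕ) (g : ℕ → ℝ) : S q M M g = g 0 * mallowsZ M q := by
  unfold S mallowsZ
  rw [Finset.mul_sum]
  apply Finset.sum_congr rfl
  intro σ _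
  have : rc M σ = 0 := by
    unfold rc
    rw [Finset.card_eq_zero, Finset.filter_eq_empty_iff]
    intro k _
    have := k.2
    omega
  rw [this, mul_comm]

lemma S_one (q : ℝ) (M n : ℕ) : S q M n (fun _ => 1) = mallowsZ n q := by
  simp [S, mallowsZ]

lemma Z_succ (q : ℝ) (n : ℕ) :
    mallowsZ (n+1) q = (1 + q * ∑ k ∈ range n, q ^ k) * mallowsZ n q := by
  rw [← S_one q n, S_succ q n n le_rfl, S_one]; ring

lemma Z_pos (q : ℝ) (hq : 0 < q) (n : ℕ) : 0 < mallowsZ n q :=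
  Finset.sum_pos (fun _ _ => pow_pos hq _) Finset.univ_nonempty

def g0 (r : ℕ) : ℝ := if r = 0 then 1 else 0
def g1 (r : ℕ) : ℝ := if r = 1 then 1 else 0

lemma S0_succ (q : ℝ) (M n : ℕ) (hM : M ≤ n) :
    S q M (n+1) g0 = (q * ∑ k ∈ range n, q ^ k) * S q M n g0 := by
  rw [S_succ q M n hM]
  simp [g0, S]

lemma S1_succ (q : ℝ) (M n : ℕ) (hM : M ≤ n) :
    S q M (n+1) g1 = (q * ∑ k ∈ range n, q ^ k) * S q M n g1 + S q M n g0 := by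
  rw [S_succ q M n hM]
  congr 2
  funext r
  simp [g0, g1]

lemma geo (q : ℝ) (n : ℕ) : (∑ k ∈ range n, q ^ k) * (1 - q) = 1 - q ^ n := by
  have := geom_sum_mul q n
  linarith

lemma S0_formula (q : ℝ) (h0 : 0 < q) (h1 : q < 1) (M d : ℕ) :
    S q M (M+d) g0 * (1 - q ^ (M+d)) = q ^ d * (1 - q ^ M) * mallowsZ (M+d) q := by
  induction d with
  | zero => simp [S_base, g0]; ring
  | succ d ih =>
    rw [← add_assoc, S0_succ q M _ (by omega), Z_succ]
    have hg := geo q (M+d)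
    set s := ∑ k ∈ range (M+d), q ^ k
    have h1q : 1 - q ≠ 0 := by linarith
    have e : q ^ (M+d+1) = 1 - (1 + q * s) * (1 - q) := by
      have : q ^ (M+d) = 1 - s * (1-q) := by linarith
      rw [pow_succ, this]; ring
    rw [e]
    rw [← hg] at ih
    have ih' := ih
    linear_combination (1 + q * s) * q * ih'

lemma S1_formula (q : ℝ) (h0 : 0 < q) (h1 : q < 1) (M d : ℕ) (hM : 1 ≤ M) :
    q * S q M (M+d) g1 * (1 - q ^ (M+d)) = q ^ d * (1 - q ^ M) *
      (∑ k ∈ range d, (1 - q) / (1 - q ^ (M + k))) * mallowsZ (M+d) q := by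
  induction d with
  | zero => simp [S_base, g1]
  | succ d ih =>
    rw [← add_assoc, S1_succ q M _ (by omega), Z_succ, Finset.sum_range_succ]
    have hg := geo q (M+d)
    have hN := S0_formula q h0 h1 M d
    have hne : 1 - q ^ (M+d) ≠ 0 := by
      have := pow_lt_one₀ h0.le h1 (show M + d ≠ 0 by omega)
      linarith
    set s := ∑ k ∈ range (M+d), q ^ k
    have e : q ^ (M+d+1) = 1 - (1 + q * s) * (1 - q) := by
      have : q ^ (M+d) = 1 - s * (1-q) := by linarith
      rw [pow_succ, this]; ring
    rw [e]
    set T := ∑ k ∈ range d, (1 - q) / (1 - q ^ (M + k))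
    have hX : (1 - q) / (1 - q ^ (M + d)) * (1 - q ^ (M+d)) = 1 - q := div_mul_cancel₀ _ hne
    set X := (1 - q) / (1 - q ^ (M + d))
    have hN' : S q M (M+d) g0 * (1 - q) = q ^ d * (1 - q ^ M) * mallowsZ (M+d) q * X := by
      apply mul_right_cancel₀ hne
      linear_combination (1-q) * hN - q ^ d * (1 - q ^ M) * mallowsZ (M+d) q * hX
    rw [← hg] at ih
    linear_combination (1 + q * s) * q * ih + (1 + q * s) * q * hN'

lemma mem_win {n M : ℕ} (hM : 1 ≤ M) (hMn : M < n) (σ : Equiv.Perm (Fin n)) :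
    σ ∈ winEvent n M ↔ rc M σ = 1 := by
  unfold winEvent
  rw [if_neg (by omega)]
  simp only [Finset.mem_filter, Finset.mem_univ, true_and]
  unfold rc
  rw [Finset.card_eq_one]
  constructor
  · rintro ⟨j, hMj, hj, hsup⟩
    refine ⟨j, ?_⟩
    ext k
    simp only [Finset.mem_filter, Finset.mem_univ, true_and, Finset.mem_singleton]
    constructor
    · rintro ⟨hMk, hk⟩
      rcases lt_trichotomy k j with h | h | h
      · exfalso
        have h1 : (σ k : ℕ) ≤ (Finset.univ.filter (fun i : Fin n => i < j)).sup (fun i => (σ i : ℕ)) :=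
          Finset.le_sup (f := fun i => (σ i : ℕ)) (by simpa using h)
        rw [hsup] at h1
        have h2 : (Finset.univ.filter (fun i : Fin n => (i:ℕ) < M)).sup (fun i => (σ i : ℕ)) < σ k := by
          rw [Finset.sup_lt_iff]
          · intro i hi
            simp only [Finset.mem_filter, Finset.mem_univ, true_and] at hi
            exact hk i (by rw [Fin.lt_def]; omega)
          · have := hk ⟨0, by omega⟩ (by rw [Fin.lt_def]; show 0 < (k:ℕ); omega)
            rw [Fin.lt_def] at this
            simp only [bot_eq_zero]
            omega
        omega
      · exact h
      · exfalso
        have := hk j h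
        rw [Fin.lt_def] at this
        have := (σ k).2
        omega
    · rintro rfl
      refine ⟨hMj, fun i hi => ?_⟩
      have h1 : σ i ≠ σ k := fun h => hi.ne (σ.injective h)
      have h2 := (σ i).2
      rw [Fin.lt_def]
      have : (σ i : ℕ) ≠ σ k := fun h => h1 (Fin.ext h)
      omega
  · rintro ⟨k, hk⟩
    have hiff : ∀ l : Fin n, (M ≤ (l:ℕ) ∧ IsRec σ l) ↔ l = k := by
      intro l
      have := Finset.ext_iff.1 hk l
      simpa using this
    obtain ⟨j, hj⟩ := σ.surjective ⟨n-1, by omega⟩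
    have hjv : (σ j : ℕ) = n - 1 := by rw [hj]
    have hjrec : IsRec σ j := by
      intro i hi
      have h1 : σ i ≠ σ j := fun h => hi.ne (σ.injective h)
      have h2 := (σ i).2
      rw [Fin.lt_def]
      have : (σ i : ℕ) ≠ σ j := fun h => h1 (Fin.ext h)
      omega
    have hkk := (hiff k).2 rfl
    have hMj : M ≤ (j : ℕ) := by
      by_contra hlt
      have h1 := hkk.2 j (by rw [Fin.lt_def]; omega)
      rw [Fin.lt_def] at h1
      have := (σ k).2
      omega
    have hjk : j = k := (hiff j).1 ⟨hMj, hjrec⟩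
    refine ⟨j, hMj, hjv, le_antisymm ?_ ?_⟩
    · have hne : (Finset.univ.filter (fun i : Fin n => i < j)).Nonempty :=
        ⟨⟨0, by omega⟩, by rw [Finset.mem_filter]; exact ⟨Finset.mem_univ _, by rw [Fin.lt_def]; show 0 < (j:ℕ); omega⟩⟩
      obtain ⟨i, hi, hmax⟩ := Finset.exists_max_image _ (fun i => (σ i : ℕ)) hne
      simp only [Finset.mem_filter, Finset.mem_univ, true_and] at hi hmax
      have hiM : (i : ℕ) < M := by
        by_contra hlt
        have : IsRec σ i := by
          intro l hl
          have h1 := hmax l (hl.trans hi)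
          have h2 : σ l ≠ σ i := fun h => hl.ne (σ.injective h)
          exact lt_of_le_of_ne h1 h2
        have := (hiff i).1 ⟨by omega, this⟩
        rw [← hjk] at this
        exact hi.ne this
      refine le_trans (Finset.sup_le (a := (σ i : ℕ)) ?_) ?_
      · intro l hl
        exact hmax l (by simpa using hl)
      · exact Finset.le_sup (f := fun i => (σ i : ℕ)) (by simpa using hiM)
    · apply Finset.sup_mono
      intro i hi
      simp only [Finset.mem_filter, Finset.mem_univ, true_and] at hi ⊢
      rw [Fin.lt_def]; omega

lemma succProb_eq (q : ℝ) (h0 : 0 < q) (h1 : q < 1) (n M : ℕ) (hM : 1 ≤ M) (hMn : M < n) :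
    succProb n M q = q⁻¹ * (q ^ n / q ^ M) * (1 - q ^ M) / (1 - q ^ n) *
      ∑ k ∈ Ico M n, (1 - q) / (1 - q ^ k) := by
  have hS : succProb n M q = S q M n g1 / mallowsZ n q := by
    unfold succProb mallowsProb S
    congr 1
    have : winEvent n M = Finset.univ.filter (fun σ => rc M σ = 1) := by
      ext σ; rw [mem_win hM hMn]; simp
    rw [this, Finset.sum_filter]
    apply Finset.sum_congr rfl
    intro σ _
    simp [g1]
  obtain ⟨d, rfl⟩ := Nat.exists_eq_add_of_le hMn.le
  have hF := S1_formula q h0 h1 M d hM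
  have hZ := Z_pos q h0 (M+d)
  have hne : 1 - q ^ (M+d) ≠ 0 := by
    have := pow_lt_one₀ h0.le h1 (show M + d ≠ 0 by omega)
    linarith
  rw [hS, Finset.sum_Ico_eq_sum_range, Nat.add_sub_cancel_left]
  set T := ∑ k ∈ range d, (1 - q) / (1 - q ^ (M + k))
  have hdiv : q ^ (M+d) / q ^ M = q ^ d := by
    rw [pow_add]; field_simp
  rw [hdiv]
  rw [div_eq_iff hZ.ne']
  have : S q M (M+d) g1 = (q ^ d * (1 - q ^ M) * T * mallowsZ (M+d) q) / (q * (1 - q ^ (M+d))) := by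
    rw [eq_div_iff (mul_ne_zero h0.ne' hne), ← hF]; ring
  rw [this]
  field_simp

/-- the telescoping log comparison -/
lemma sum_bound (q : ℝ) (h0 : 0 < q) (h1 : q < 1) (n M : ℕ) (hM : 1 ≤ M) (hMn : M ≤ n) :
    |(∑ k ∈ Ico M n, (1 - q) / (1 - q ^ k)) -
      ((n - M) * (1 - q) + (Real.log (1 - q ^ n) - Real.log (1 - q ^ M)))| ≤
      n * ((1 - q) / (1 - q ^ M)) ^ 2 := by
  have hpos : ∀ k, 1 ≤ k → 0 < 1 - q ^ k := fun k hk => by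
    have := pow_lt_one₀ h0.le h1 (show k ≠ 0 by omega)
    linarith
  have htel : ((n:ℝ) - M) * (1 - q) + (Real.log (1 - q ^ n) - Real.log (1 - q ^ M)) =
      ∑ k ∈ Ico M n, ((1 - q) + (Real.log (1 - q ^ (k+1)) - Real.log (1 - q ^ k))) := by
    rw [Finset.sum_add_distrib, Finset.sum_Ico_sub (fun k => Real.log (1 - q ^ k)) hMn]
    simp [Nat.cast_sub hMn]
    ring
  rw [htel, ← Finset.sum_sub_distrib]
  refine (Finset.abs_sum_le_sum_abs _ _).trans ?_
  have hterm : ∀ k ∈ Ico M n, |(1 - q) / (1 - q ^ k) - ((1 - q) + (Real.log (1 - q ^ (k+1)) - Real.log (1 - q ^ k)))| ≤ ((1 - q) / (1 - q ^ M)) ^ 2 := by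
    intro k hk
    rw [Finset.mem_Ico] at hk
    have hk0 := hpos k (by omega)
    have hk1 := hpos (k+1) (by omega)
    have hM0 := hpos M hM
    rw [← Real.log_div hk1.ne' hk0.ne']
    have hqk : 0 < q ^ k := pow_pos h0 k
    set a := q ^ k * (1 - q) / (1 - q ^ k) with ha
    have ha0 : 0 ≤ a := by
      have : 0 ≤ 1 - q := by linarith
      positivity
    have e1 : (1 - q ^ (k+1)) / (1 - q ^ k) = 1 + a := by
      rw [ha, pow_succ]; field_simp; ring
    have e2 : (1 - q) / (1 - q ^ k) = (1 - q) + a := by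
      rw [ha]; field_simp; ring
    have hale : a ≤ (1 - q) / (1 - q ^ M) := by
      have h1q : 0 < 1 - q := by linarith
      rw [ha]
      apply div_le_div₀ h1q.le _ hM0
      · have := pow_le_pow_of_le_one h0.le h1.le hk.1
        linarith
      · nlinarith
    rw [e1, e2]
    have l1 := Real.log_le_sub_one_of_pos (show 0 < 1 + a by linarith)
    have l2 := Real.one_sub_inv_le_log_of_pos (show 0 < 1 + a by linarith)
    have l3 : a - (1 - (1 + a)⁻¹) ≤ a ^ 2 := by
      have : a - (1 - (1 + a)⁻¹) = a ^ 2 / (1 + a) := by field_simp; ring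
      rw [this]
      exact div_le_self (by positivity) (by linarith)
    have l4 : a ^ 2 ≤ ((1 - q) / (1 - q ^ M)) ^ 2 := by gcongr
    rw [abs_le]; constructor <;> linarith
  refine (Finset.sum_le_card_nsmul _ _ _ hterm).trans ?_
  rw [nsmul_eq_mul, Nat.card_Ico]
  gcongr
  omega

end Mallows

open Mallows in
theorem stmt_2 (c b : ℝ) (hc : 0 < c) (hb : b ∈ Set.Ioo (0 : ℝ) 1)
    (M : ℕ → ℕ) (hM : ∀ n, 2 ≤ n → 1 ≤ M n ∧ M n ≤ n - 1)
    (hlim : Tendsto (fun n : ℕ => (M n : ℝ) / n) atTop (nhds b)) :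
    Tendsto (fun n : ℕ => succProb n (M n) (1 - c / n)) atTop
      (nhds (c * Real.exp (-c) * (Real.exp (b * c) - 1) / (1 - Real.exp (-c)) *
        (1 - b + (1 / c) * Real.log ((1 - Real.exp (-c)) / (1 - Real.exp (-(b * c))))))) := by
  have hbc : 0 < b * c := mul_pos hb.1 hc
  have hcn : Tendsto (fun n : ℕ => c / (n:ℝ)) atTop (nhds 0) :=
    tendsto_const_div_atTop_nhds_zero_nat c
  have hq1 : Tendsto (fun n : ℕ => 1 - c / (n:ℝ)) atTop (nhds 1) := by
    simpa using hcn.const_sub 1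
  have hev : ∀ᶠ n : ℕ in atTop, 2 ≤ n ∧ 0 < 1 - c / (n:ℝ) ∧ 1 - c / (n:ℝ) < 1 := by
    filter_upwards [eventually_ge_atTop 2, hq1.eventually (lt_mem_nhds zero_lt_one)] with n h1 h2
    refine ⟨h1, h2, ?_⟩
    have : (0:ℝ) < n := by exact_mod_cast (by omega : 0 < n)
    have := div_pos hc this
    linarith
  have hqn : Tendsto (fun n : ℕ => (1 - c / (n:ℝ)) ^ n) atTop (nhds (Real.exp (-c))) := by
    have := Real.tendsto_one_add_div_pow_exp (-c)
    refine this.congr fun n => ?_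
    congr 1; ring
  have hqM : Tendsto (fun n : ℕ => (1 - c / (n:ℝ)) ^ M n) atTop (nhds (Real.exp (-(b * c)))) := by
    have h := hqn.rpow hlim (Or.inl (Real.exp_pos _).ne')
    rw [← Real.exp_mul] at h
    have e : -c * b = -(b * c) := by ring
    rw [e] at h
    refine h.congr' ?_
    filter_upwards [hev] with n ⟨h2, hq, _⟩
    have hn : (n:ℝ) ≠ 0 := by exact_mod_cast (by omega : n ≠ 0)
    rw [← Real.rpow_natCast, ← Real.rpow_natCast, ← Real.rpow_mul hq.le]
    congr 1; field_simp
  have p1 : 0 < 1 - Real.exp (-c) := by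
    have := Real.exp_lt_one_iff.2 (show -c < 0 by linarith); linarith
  have p2 : 0 < 1 - Real.exp (-(b*c)) := by
    have := Real.exp_lt_one_iff.2 (show -(b*c) < 0 by linarith); linarith
  have hn1 := hqn.const_sub 1
  have hM1 := hqM.const_sub 1
  -- main part of the sum
  have hA : Tendsto (fun n : ℕ => ((n:ℝ) - M n) * (1 - (1 - c / (n:ℝ))) +
      (Real.log (1 - (1 - c / (n:ℝ)) ^ n) - Real.log (1 - (1 - c / (n:ℝ)) ^ M n))) atTop
      (nhds ((1 - b) * c + (Real.log (1 - Real.exp (-c)) - Real.log (1 - Real.exp (-(b*c)))))) := by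
    refine Tendsto.add ?_ ((hn1.log p1.ne').sub (hM1.log p2.ne'))
    refine ((hlim.const_sub 1).mul_const c).congr' ?_
    filter_upwards [hev] with n ⟨h2, _, _⟩
    have hn : (n:ℝ) ≠ 0 := by exact_mod_cast (by omega : n ≠ 0)
    field_simp; ring
  have hB : Tendsto (fun n : ℕ => (n:ℝ) * ((1 - (1 - c / (n:ℝ))) / (1 - (1 - c / (n:ℝ)) ^ M n)) ^ 2)
      atTop (nhds 0) := by
    have h := (hcn.const_mul c).div (hM1.pow 2) (pow_ne_zero 2 p2.ne')
    rw [mul_zero, zero_div] at h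
    refine h.congr' ?_
    filter_upwards [hev] with n ⟨h2, _, _⟩
    have hn : (n:ℝ) ≠ 0 := by exact_mod_cast (by omega : n ≠ 0)
    simp only [Pi.div_apply]
    rw [div_pow, sub_sub_cancel, ← mul_div_assoc]
    congr 1
    field_simp
  have hC : Tendsto (fun n : ℕ => ∑ k ∈ Ico (M n) n, (1 - (1 - c / (n:ℝ))) / (1 - (1 - c / (n:ℝ)) ^ k))
      atTop (nhds ((1 - b) * c + (Real.log (1 - Real.exp (-c)) - Real.log (1 - Real.exp (-(b*c)))))) := by
    have hD := squeeze_zero_norm' (f := fun n : ℕ => (∑ k ∈ Ico (M n) n, (1 - (1 - c / (n:ℝ))) / (1 - (1 - c / (n:ℝ)) ^ k)) -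
      (((n:ℝ) - M n) * (1 - (1 - c / (n:ℝ))) +
      (Real.log (1 - (1 - c / (n:ℝ)) ^ n) - Real.log (1 - (1 - c / (n:ℝ)) ^ M n)))) ?_ hB
    · have := hD.add hA
      rw [zero_add] at this
      refine this.congr fun n => ?_
      ring
    · filter_upwards [hev] with n ⟨h2, hq0, hq1⟩
      have := hM n h2
      exact sum_bound _ hq0 hq1 n (M n) this.1 (by omega)
  have hpre := (((hq1.inv₀ one_ne_zero).mul (hqn.div hqM (Real.exp_pos _).ne')).mul hM1).div hn1 p1.ne'
  have hfin := hpre.mul hC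
  have heq : (1:ℝ)⁻¹ * (Real.exp (-c) / Real.exp (-(b * c))) * (1 - Real.exp (-(b * c))) / (1 - Real.exp (-c)) *
      ((1 - b) * c + (Real.log (1 - Real.exp (-c)) - Real.log (1 - Real.exp (-(b*c))))) =
      c * Real.exp (-c) * (Real.exp (b * c) - 1) / (1 - Real.exp (-c)) *
        (1 - b + (1 / c) * Real.log ((1 - Real.exp (-c)) / (1 - Real.exp (-(b * c))))) := by
    rw [Real.log_div p1.ne' p2.ne']
    have e : Real.exp (-(b*c)) = (Real.exp (b*c))⁻¹ := Real.exp_neg _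
    generalize Real.log (1 - Real.exp (-c)) = L1
    generalize Real.log (1 - Real.exp (-(b*c))) = L2
    rw [e]
    have hE := Real.exp_pos (b*c)
    generalize Real.exp (b*c) = E at *
    generalize Real.exp (-c) = F at *
    field_simp
  rw [heq] at hfin
  refine hfin.congr' ?_
  filter_upwards [hev] with n ⟨h2, hq0, hq1⟩
  have := hM n h2
  exact (succProb_eq _ hq0 hq1 n (M n) this.1 (by omega)).symm
end

section
/- Fix c > 0 and define H : (0,1) → ℝ by H(b) = (e^{bc} − 1)(1 − b + (1/c) log((1 − e^{−c})/(1 − e^{−bc}))). Then H attains its maximum over (0,1) uniquely at the point b*(c) = (1/c) log(1 + (e^c − 1)/e); that is, b*(c) ∈ (0,1) and H(b) < H(b*(c)) for all b ∈ (0,1) with b ≠ b*(c). -/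
open Finset Filter

theorem stmt_3 (c : ℝ) (hc : 0 < c) :
    let H : ℝ → ℝ := fun b => (Real.exp (b * c) - 1) *
      (1 - b + (1 / c) * Real.log ((1 - Real.exp (-c)) / (1 - Real.exp (-(b * c)))))
    let bstar : ℝ := (1 / c) * Real.log (1 + (Real.exp c - 1) / Real.exp 1)
    bstar ∈ Set.Ioo (0 : ℝ) 1 ∧
      ∀ b ∈ Set.Ioo (0 : ℝ) 1, b ≠ bstar → H b < H bstar := by
  intro H bstar
  have hA : 0 < Real.exp c - 1 := by linarith [Real.add_one_le_exp c]
  have he : 1 < Real.exp 1 := by linarith [Real.add_one_le_exp (1 : ℝ)]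
  have he0 : 0 < Real.exp 1 := Real.exp_pos 1
  have hAe : 0 < (Real.exp c - 1) / Real.exp 1 := by positivity
  have hAlt : (Real.exp c - 1) / Real.exp 1 < Real.exp c - 1 := div_lt_self hA he
  have hbc : bstar * c = Real.log (1 + (Real.exp c - 1) / Real.exp 1) := by
    simp only [bstar]; field_simp
  have hexp : Real.exp (bstar * c) - 1 = (Real.exp c - 1) / Real.exp 1 := by
    rw [hbc, Real.exp_log (by linarith)]; ring
  have hb0 : 0 < bstar := by
    have : 0 < bstar * c := by rw [hbc]; exact Real.log_pos (by linarith)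
    exact (pos_iff_pos_of_mul_pos this).2 hc
  have hb1 : bstar < 1 := by
    have : bstar * c < c := by
      rw [hbc, Real.log_lt_iff_lt_exp (by linarith)]; linarith
    nlinarith
  have key : ∀ b, 0 < b → H b = (Real.exp (b * c) - 1) *
      ((1 / c) * Real.log ((Real.exp c - 1) / (Real.exp (b * c) - 1))) := by
    intro b hb
    have hu : 0 < Real.exp (b * c) - 1 := by
      linarith [Real.add_one_le_exp (b * c), mul_pos hb hc]
    have h1 : (1 - Real.exp (-c)) / (1 - Real.exp (-(b * c))) =
        (Real.exp c - 1) / (Real.exp (b * c) - 1) * Real.exp (b * c - c) := by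
      have e1 : 1 - Real.exp (-c) = (Real.exp c - 1) / Real.exp c := by
        rw [Real.exp_neg]; field_simp
      have e2 : 1 - Real.exp (-(b * c)) = (Real.exp (b * c) - 1) / Real.exp (b * c) := by
        rw [Real.exp_neg]; field_simp
      rw [e1, e2, Real.exp_sub]
      field_simp
    simp only [H]
    rw [h1, Real.log_mul (by positivity) (by positivity), Real.log_exp]
    field_simp
    ring
  refine ⟨⟨hb0, hb1⟩, ?_⟩
  rintro b ⟨hb, -⟩ hne
  rw [key b hb, key bstar hb0, hexp]
  have hu : 0 < Real.exp (b * c) - 1 := by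
    linarith [Real.add_one_le_exp (b * c), mul_pos hb hc]
  have hune : Real.exp (b * c) - 1 ≠ (Real.exp c - 1) / Real.exp 1 := by
    intro h
    rw [← hexp] at h
    have h2 := Real.exp_injective (sub_left_injective h)
    exact hne (mul_right_cancel₀ hc.ne' h2)
  generalize Real.exp (b * c) - 1 = u at *
  generalize Real.exp c - 1 = A at *
  have h3 : A / (A / Real.exp 1) = Real.exp 1 := by field_simp
  rw [h3, Real.log_exp]
  have h4 := Real.log_lt_sub_one_of_pos (x := A / Real.exp 1 / u) (by positivity)
    (by intro h; rw [div_eq_one_iff_eq hu.ne'] at h; exact hune h.symm)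
  have h5 : A / Real.exp 1 / u = A / u / Real.exp 1 := by field_simp
  rw [h5, Real.log_div (by positivity) (by positivity), Real.log_exp, ← h5] at h4
  have h6 : Real.log (A / u) < A / Real.exp 1 / u := by linarith
  rw [lt_div_iff₀ hu] at h6
  have hci : 0 < 1 / c := by positivity
  nlinarith [mul_lt_mul_of_pos_right h6 hci]
end

section
/- Fix q ∈ (0,1), and let L be the positive integer satisfying (L−1)/L < q ≤ L/(L+1). Then (1−q) q^{L−1} L > 1/e. -/
open Finset Filter

theorem stmt_12 (q : ℝ) (hq : q ∈ Set.Ioo (0 : ℝ) 1) (L : ℕ) (hL : 1 ≤ L)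
    (hL1 : ((L : ℝ) - 1) / L < q) (hL2 : q ≤ (L : ℝ) / ((L : ℝ) + 1)) :
    (1 - q) * q ^ (L - 1) * L > (Real.exp 1)⁻¹ := by
  obtain ⟨hq0, hq1⟩ := hq
  obtain ⟨k, rfl⟩ : ∃ k, L = k + 1 := ⟨L - 1, by omega⟩
  simp only [Nat.add_sub_cancel]
  push_cast at *
  have hk : (0 : ℝ) ≤ k := Nat.cast_nonneg k
  set x : ℝ := (k : ℝ) with hx
  obtain ⟨r, hr⟩ : ∃ r : ℝ, r = (x + 1) / (x + 1 + 1) := ⟨_, rfl⟩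
  rw [← hr] at hL2
  have hr0 : 0 < r := by rw [hr]; positivity
  have hr1 : r * (x + 2) = x + 1 := by rw [hr]; field_simp; ring
  rw [div_lt_iff₀ (by positivity)] at hL1
  -- Bernoulli
  have hB : 1 + x * (q / r - 1) ≤ (q / r) ^ k := by
    have h := one_add_mul_le_pow (a := q / r - 1) (by
      have : 0 < q / r := by positivity
      linarith) k
    simpa [hx] using h
  have hxq : x * (1 - q) ≤ r := by
    have h1 : x * (1 - q) * (x + 2) ≤ r * (x + 2) := by
      rw [hr1]; nlinarith
    exact le_of_mul_le_mul_right h1 (by positivity)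
  have hmid : 1 - r ≤ (1 - q) * (1 + x * (q / r - 1)) := by
    have e : (1 - q) * (1 + x * (q / r - 1)) - (1 - r)
        = (r - q) * (r - x * (1 - q)) / r := by
      field_simp; ring
    have : 0 ≤ (r - q) * (r - x * (1 - q)) / r :=
      div_nonneg (mul_nonneg (by linarith) (by linarith)) hr0.le
    linarith
  have hmain : (1 - r) * r ^ k ≤ (1 - q) * q ^ k := by
    have h2 : 1 - r ≤ (1 - q) * (q / r) ^ k :=
      hmid.trans (mul_le_mul_of_nonneg_left hB (by linarith))
    calc (1 - r) * r ^ k ≤ (1 - q) * (q / r) ^ k * r ^ k :=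
          mul_le_mul_of_nonneg_right h2 (by positivity)
      _ = (1 - q) * q ^ k := by
          rw [mul_assoc, ← mul_pow, div_mul_cancel₀ _ hr0.ne']
  have hval : (1 - r) * r ^ k * (x + 1) = r ^ (k + 1) := by
    have : (1 - r) * (x + 1) = r := by linarith
    rw [pow_succ]
    linear_combination r ^ k * this
  have hexp : r⁻¹ < Real.exp (1 / (x + 1)) := by
    have h := Real.add_one_lt_exp (x := 1 / (x + 1)) (by positivity)
    have e : r⁻¹ = 1 / (x + 1) + 1 := by rw [hr]; field_simp; ring
    rwa [e]
  have hpow : (r⁻¹) ^ (k + 1) < Real.exp 1 := by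
    have h := pow_lt_pow_left₀ hexp (by positivity) (Nat.succ_ne_zero k)
    rw [← Real.exp_nat_mul] at h
    have e : ((k.succ : ℕ) : ℝ) * (1 / (x + 1)) = 1 := by
      push_cast; rw [← hx]; field_simp
    rwa [e] at h
  have hfin : (Real.exp 1)⁻¹ < r ^ (k + 1) := by
    rw [inv_pow] at hpow
    exact inv_lt_of_inv_lt₀ (by positivity) hpow
  have := mul_le_mul_of_nonneg_right hmain (by positivity : (0 : ℝ) ≤ x + 1)
  rw [hval] at this
  exact lt_of_lt_of_le hfin this
end

section
/- For q ∈ (0,1), define V(q) = (1−q) q^{L(q)−1} L(q), where L(q) is the unique positive integer with (L(q)−1)/L(q) < q ≤ L(q)/(L(q)+1). Then lim_{q→1⁻} V(q) = 1/e. -/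
open Finset Filter

theorem stmt_13 (L : ℝ → ℕ)
    (hL : ∀ q ∈ Set.Ioo (0 : ℝ) 1, 1 ≤ L q ∧ ((L q : ℝ) - 1) / (L q) < q ∧
      q ≤ (L q : ℝ) / ((L q : ℝ) + 1)) :
    Tendsto (fun q : ℝ => (1 - q) * q ^ (L q - 1) * (L q : ℝ))
      (nhdsWithin 1 (Set.Iio 1)) (nhds (Real.exp 1)⁻¹) := by
  have lo : Tendsto (fun q : ℝ => q * Real.exp (-1)) (nhdsWithin 1 (Set.Iio 1))
      (nhds (Real.exp 1)⁻¹) := by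
    have h : Continuous (fun q : ℝ => q * Real.exp (-1)) := by fun_prop
    have h2 := h.tendsto 1
    simp only [one_mul, Real.exp_neg] at h2 ⊢
    exact h2.mono_left nhdsWithin_le_nhds
  have hi : Tendsto (fun q : ℝ => Real.exp (-1 + 2 * (1 - q))) (nhdsWithin 1 (Set.Iio 1))
      (nhds (Real.exp 1)⁻¹) := by
    have h : Continuous (fun q : ℝ => Real.exp (-1 + 2 * (1 - q))) := by fun_prop
    have h2 := h.tendsto 1
    have e : Real.exp (-1 + 2 * (1 - (1:ℝ))) = (Real.exp 1)⁻¹ := by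
      rw [← Real.exp_neg]; norm_num
    rw [e] at h2
    exact h2.mono_left nhdsWithin_le_nhds
  have key : ∀ q ∈ Set.Ioo (0 : ℝ) 1,
      q * Real.exp (-1) ≤ (1 - q) * q ^ (L q - 1) * (L q : ℝ) ∧
      (1 - q) * q ^ (L q - 1) * (L q : ℝ) ≤ Real.exp (-1 + 2 * (1 - q)) := by
    intro q hq
    obtain ⟨h1, h2, h3⟩ := hL q hq
    obtain ⟨q0, q1⟩ := hq
    have hLpos : (1 : ℝ) ≤ (L q : ℝ) := by exact_mod_cast h1
    rw [div_lt_iff₀ (by linarith)] at h2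
    rw [le_div_iff₀ (by linarith)] at h3
    have hpow : q ^ (L q - 1) = Real.exp (((L q : ℝ) - 1) * Real.log q) := by
      rw [← Real.exp_log q0, ← Real.exp_nat_mul, Real.exp_log q0]
      push_cast [Nat.cast_sub h1]
      rfl
    have l1 : Real.log q ≤ q - 1 := Real.log_le_sub_one_of_pos q0
    have l2 : 1 - q⁻¹ ≤ Real.log q := Real.one_sub_inv_le_log_of_pos q0
    have u1 : ((L q : ℝ) - 1) * Real.log q ≤ -1 + 2 * (1 - q) := by
      have := mul_le_mul_of_nonneg_left l1 (sub_nonneg.2 hLpos)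
      nlinarith
    have u2 : -1 ≤ ((L q : ℝ) - 1) * Real.log q := by
      have h4 := mul_le_mul_of_nonneg_left l2 (sub_nonneg.2 hLpos)
      have h5 : -1 ≤ ((L q : ℝ) - 1) * (1 - q⁻¹) := by
        have : ((L q : ℝ) - 1) * (1 - q⁻¹) = (((L q : ℝ) - 1) * (q - 1)) / q := by
          field_simp
        rw [this, le_div_iff₀ q0]
        nlinarith
      linarith
    have e1 := Real.exp_le_exp.2 u1
    have e2 := Real.exp_le_exp.2 u2
    rw [← hpow] at e1 e2
    have p0 : 0 < q ^ (L q - 1) := pow_pos q0 _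
    have a1 : q ≤ (1 - q) * (L q : ℝ) := by nlinarith
    have a2 : (1 - q) * (L q : ℝ) ≤ 1 := by nlinarith
    have r : (1 - q) * q ^ (L q - 1) * (L q : ℝ) = ((1 - q) * (L q : ℝ)) * q ^ (L q - 1) := by
      ring
    rw [r]
    constructor
    · exact mul_le_mul a1 e2 (Real.exp_pos _).le (by linarith)
    · exact (mul_le_of_le_one_left p0.le a2).trans e1
  have ev : ∀ᶠ q : ℝ in nhdsWithin 1 (Set.Iio 1), q ∈ Set.Ioo (0 : ℝ) 1 :=
    Ioo_mem_nhdsLT (by norm_num)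
  exact tendsto_of_tendsto_of_tendsto_of_le_of_le' lo hi
    (ev.mono fun q hq => (key q hq).1) (ev.mono fun q hq => (key q hq).2)
end
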